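/- arXiv:0710.1701 — 5 statements merged into one kernel-verified Lean document; each statement's English description precedes it below -/
import Mathlib

section
/- Let Φ be a measure of complexity on the probability distributions over a countable alphabet A, let 𝒫 be a preparation, and suppose Q* ∈ 𝒫 is robust for 𝒫 with level of robustness h < ∞. Then the game γ(Φ,𝒫) is in equilibrium: sup_{P ∈ 𝒫} inf_{Q ∈ M} Φ(P,Q) = inf_{Q ∈ M} sup_{P ∈ 𝒫} Φ(P,Q) = h < ∞. -/
open scoped ENNReal

/-!
A strategy `q` that is robust with level `h` makes Player I indifferent. If `q` is moreover a best
reply of Player II to some `p ∈ prep`, then `Φ x q = h = Φ p q ≤ Φ p y` for all `x ∈ prep` and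
all `y`, so `(q, p)` is a saddle point and the game has value `h`. For a measure of
complexity each `P` is a best reply to itself, so a robust `Q* ∈ prep` supplies the saddle point
`(Q*, Q*)`.
-/

section RobustStrategy

variable {X Y β : Type*} {Φ : X → Y → β} {prep : Set X} {p : X} {q : Y} {h : β}

/-- The strategy `q` of Player II is robust for the preparation `prep` with level `h`: against `q`,
Player I gets the same complexity `h` whatever he plays in `prep`. The two players may have
different strategy types; in the paper both are the distributions over the alphabet. -/
def IsRobust (Φ : X → Y → β) (prep : Set X) (q : Y) (h : β) : Prop :=
  ∀ x ∈ prep, Φ x q = h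

-- `flip` because `IsSaddlePointOn` takes the minimizing player's variable first.
theorem IsRobust.isSaddlePointOn [Preorder β] (hrob : IsRobust Φ prep q h) (hp : p ∈ prep)
    (hmin : ∀ y, Φ p q ≤ Φ p y) : IsSaddlePointOn Set.univ prep (flip Φ) q p := by
  intro y _ x hx
  calc
    Φ x q = h := hrob x hx
    _ = Φ p q := (hrob p hp).symm
    _ ≤ Φ p y := hmin y

theorem robust_equilibrium_general [CompleteLinearOrder β] (hrob : IsRobust Φ prep q h)
    (hp : p ∈ prep) (hmin : ∀ y, Φ p q ≤ Φ p y) :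
    (⨆ x ∈ prep, ⨅ y, Φ x y) = h ∧ (⨅ y, ⨆ x ∈ prep, Φ x y) = h := by
  have saddle_value := isSaddlePointOn_value (Set.mem_univ q) hp (hrob.isSaddlePointOn hp hmin)
  simpa only [iInf_univ, flip, hrob p hp] using saddle_value.symm

end RobustStrategy

/-- **Robustness lemma, part 2 (equilibrium).**
If `Φ` is a measure of complexity on the probability distributions over a countable
alphabet `A`, `prep` is a preparation, and `Qs ∈ prep` is robust for `prep` with level of
robustness `h < ∞`, then the game `γ(Φ, prep)` is in equilibrium:
`sup_{P ∈ prep} inf_{Q} Φ(P,Q) = inf_{Q} sup_{P ∈ prep} Φ(P,Q) = h < ∞`. -/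
theorem robust_equilibrium {A : Type*} [Countable A]
    (Φ : PMF A → PMF A → ℝ≥0∞)
    (hmin : ∀ P Q : PMF A, Φ P P ≤ Φ P Q)
    (hstrict : ∀ P Q : PMF A, Q ≠ P → Φ P Q = Φ P P → Φ P P = ⊤)
    (prep : Set (PMF A)) (hprep : prep.Nonempty)
    (Qs : PMF A) (hQs : Qs ∈ prep)
    (h : ℝ≥0∞) (hh : h < ⊤)
    (hrob : ∀ P ∈ prep, Φ P Qs = h) :
    (⨆ P ∈ prep, ⨅ Q : PMF A, Φ P Q) = h ∧
    (⨅ Q : PMF A, ⨆ P ∈ prep, Φ P Q) = h :=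
  robust_equilibrium_general hrob hQs (hmin Qs)
end

section
/- (MaxEnt calculus.) Let Φ(P,Q) = ξ_Q(Σ_{i∈A} p_i κ(q_i)) be a measure of complexity on the probability distributions over a countable alphabet A, where κ : [0,1] → [0,∞]. Suppose Q is a probability distribution and λ₀, λ₁,…,λ_k are real constants such that κ(q_i) = λ₀ + Σ_ν λ_ν f_ν(i) for all i ∈ A, and suppose that for each ν the series a_ν = Σ_{i∈A} q_i f_ν(i) converges absolutely. Then Q ∈ 𝒫_a, Q is the unique maximum-entropy distribution of 𝒫_a, the game γ(Φ,𝒫_a) is in equilibrium, and MaxEnt(Φ,𝒫_a) = ξ_Q(λ₀ + Σ_ν λ_ν a_ν) < ∞ (assuming this value is finite). -/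
open scoped ENNReal

/-- A probability mass function on the alphabet `A`, given by real point
probabilities. -/
def IsPMF {A : Type*} (P : A → ℝ) : Prop := (∀ i, 0 ≤ P i) ∧ HasSum P 1

/-- The natural preparation `𝒫_a` determined by the functions `f_ν` and the
prescribed (absolutely convergent) averages `a_ν`. -/
def NatPrep {A : Type*} {k : ℕ} (f : Fin k → A → ℝ) (a : Fin k → ℝ) : Set (A → ℝ) :=
  {P | IsPMF P ∧
    ∀ ν, Summable (fun i => |P i * f ν i|) ∧ HasSum (fun i => P i * f ν i) (a ν)}

/-!
On `𝒫_a` the cost `P ↦ Φ(P, Q)` is constant, because `κ(q_i)` is an affine combination of the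
functions `f_ν`, whose means are prescribed. Hence, for every `P ∈ 𝒫_a` and every distribution `Q'`,
`Φ(P, P) ≤ Φ(P, Q) = Φ(Q, Q) ≤ Φ(Q, Q')`: the pair `(Q, Q)` is a saddle point of the game, and `Q`
maximizes the entropy, uniquely by the equality clause for `Φ`.
-/

/-- A measure of complexity on the set `M` of distributions: the cost `Φ P Q` of using `Q` when the
truth is `P` is least at `Q = P`, and only there unless the entropy `Φ P P` is infinite. The carrier
`α` and the ordered set of values `γ` stand for `A → ℝ` and `[0, ∞]`. -/
structure IsComplexityMeasure {α γ : Type*} [Preorder γ] [OrderTop γ]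
    (M : Set α) (Φ : α → α → γ) : Prop where
  entropy_le : ∀ ⦃P⦄, P ∈ M → ∀ ⦃Q⦄, Q ∈ M → Φ P P ≤ Φ P Q
  entropy_eq_top : ∀ ⦃P⦄, P ∈ M → ∀ ⦃Q⦄, Q ∈ M → Q ≠ P → Φ P Q = Φ P P → Φ P P = ⊤

namespace IsComplexityMeasure

variable {α γ : Type*} {M S : Set α} {Φ : α → α → γ} {P Q : α}

lemma isSaddlePointOn [Preorder γ] [OrderTop γ] (hΦ : IsComplexityMeasure M Φ) (hQ : Q ∈ M)
    (hmax : IsMaxOn (Φ · Q) S Q) : IsSaddlePointOn M S (fun Q' P => Φ P Q') Q Q :=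
  fun _ hQ' _ hP => (hmax hP).trans (hΦ.entropy_le hQ hQ')

lemma isMaxOn_entropy [Preorder γ] [OrderTop γ] (hΦ : IsComplexityMeasure M Φ) (hS : S ⊆ M)
    (hQ : Q ∈ M) (hmax : IsMaxOn (Φ · Q) S Q) : IsMaxOn (fun P => Φ P P) S Q :=
  fun _ hP => (hΦ.entropy_le (hS hP) hQ).trans (hmax hP)

lemma entropy_lt_of_isMaxOn [PartialOrder γ] [OrderTop γ] (hΦ : IsComplexityMeasure M Φ)
    (hS : S ⊆ M) (hQ : Q ∈ M) (hmax : IsMaxOn (Φ · Q) S Q) (htop : Φ Q Q ≠ ⊤) (hP : P ∈ S)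
    (hne : P ≠ Q) : Φ P P < Φ Q Q := by
  refine (hΦ.isMaxOn_entropy hS hQ hmax hP).lt_of_ne fun heq => htop ?_
  have hPQ : Φ P Q = Φ P P :=
    ((hmax hP).trans_eq heq.symm).antisymm (hΦ.entropy_le (hS hP) hQ)
  exact heq.symm.trans (hΦ.entropy_eq_top (hS hP) hQ hne.symm hPQ)

lemma iSup_entropy_eq [CompleteLattice γ] (hΦ : IsComplexityMeasure M Φ) (hS : S ⊆ M)
    (hQ : Q ∈ S) (hmax : IsMaxOn (Φ · Q) S Q) : ⨆ P ∈ S, Φ P P = Φ Q Q :=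
  le_antisymm (iSup₂_le (hΦ.isMaxOn_entropy hS (hS hQ) hmax))
    (le_iSup₂_of_le Q hQ le_rfl)

end IsComplexityMeasure

lemma hasSum_mul_const_add_sum {A ι R : Type*} [Fintype ι] [CommSemiring R] [TopologicalSpace R]
    [IsTopologicalSemiring R] {p : A → R} {f : ι → A → R} {s : R} {a : ι → R} (hp : HasSum p s)
    (hf : ∀ ν, HasSum (fun i => p i * f ν i) (a ν)) (c : R) (l : ι → R) :
    HasSum (fun i => p i * (c + ∑ ν, l ν * f ν i)) (s * c + ∑ ν, l ν * a ν) := by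
  simpa only [mul_add, Finset.mul_sum, mul_left_comm] using
    (hp.mul_right c).add (hasSum_sum fun ν _ => (hf ν).mul_left (l ν))

lemma tsum_ofReal_mul_ofReal {A : Type*} {p g : A → ℝ} {s : ℝ} (hp : ∀ i, 0 ≤ p i)
    (hg : ∀ i, 0 ≤ g i) (hs : HasSum (fun i => p i * g i) s) :
    ∑' i, ENNReal.ofReal (p i) * ENNReal.ofReal (g i) = ENNReal.ofReal s := by
  simp only [← ENNReal.ofReal_mul (hp _)]
  rw [← ENNReal.ofReal_tsum_of_nonneg (fun i => mul_nonneg (hp i) (hg i)) hs.summable, hs.tsum_eq]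

lemma tsum_ofReal_mul_of_mem_natPrep {A : Type*} {k : ℕ} {f : Fin k → A → ℝ} {a : Fin k → ℝ}
    {P : A → ℝ} (hP : P ∈ NatPrep f a) {lam0 : ℝ} {lam : Fin k → ℝ}
    (hpos : ∀ i, 0 ≤ lam0 + ∑ ν, lam ν * f ν i) :
    ∑' i, ENNReal.ofReal (P i) * ENNReal.ofReal (lam0 + ∑ ν, lam ν * f ν i) =
      ENNReal.ofReal (lam0 + ∑ ν, lam ν * a ν) := by
  obtain ⟨⟨hP0, hP1⟩, hPf⟩ := hP
  have hmean := hasSum_mul_const_add_sum hP1 (fun ν => (hPf ν).2) lam0 lam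
  rw [one_mul] at hmean
  exact tsum_ofReal_mul_ofReal hP0 hpos hmean

/-- `ξ` is the function `ξ_Q`, and `κ(q_i)` is replaced by its affine expression. -/
theorem maxent_calculus_general {A : Type*} {k : ℕ} {f : Fin k → A → ℝ} {a : Fin k → ℝ}
    {Φ : (A → ℝ) → (A → ℝ) → ℝ≥0∞} (hΦ : IsComplexityMeasure {P | IsPMF P} Φ)
    {Q : A → ℝ} (hQ : Q ∈ NatPrep f a) {lam0 : ℝ} {lam : Fin k → ℝ}
    (hpos : ∀ i, 0 ≤ lam0 + ∑ ν, lam ν * f ν i) {ξ : ℝ≥0∞ → ℝ≥0∞}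
    (hΦQ : ∀ P, IsPMF P → Φ P Q =
      ξ (∑' i, ENNReal.ofReal (P i) * ENNReal.ofReal (lam0 + ∑ ν, lam ν * f ν i)))
    (hfin : ξ (ENNReal.ofReal (lam0 + ∑ ν, lam ν * a ν)) ≠ ⊤) :
    Φ Q Q = ξ (ENNReal.ofReal (lam0 + ∑ ν, lam ν * a ν)) ∧
    (∀ P ∈ NatPrep f a, P ≠ Q → Φ P P < Φ Q Q) ∧
    (⨆ P ∈ NatPrep f a, ⨅ Q' ∈ {R : A → ℝ | IsPMF R}, Φ P Q')
        = ξ (ENNReal.ofReal (lam0 + ∑ ν, lam ν * a ν)) ∧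
    (⨅ Q' ∈ {R : A → ℝ | IsPMF R}, ⨆ P ∈ NatPrep f a, Φ P Q')
        = ξ (ENNReal.ofReal (lam0 + ∑ ν, lam ν * a ν)) ∧
    (⨆ P ∈ NatPrep f a, Φ P P) = ξ (ENNReal.ofReal (lam0 + ∑ ν, lam ν * a ν)) := by
  have hS : NatPrep f a ⊆ {P | IsPMF P} := fun _ hP => hP.1
  have hconst : ∀ P ∈ NatPrep f a, Φ P Q = ξ (ENNReal.ofReal (lam0 + ∑ ν, lam ν * a ν)) :=
    fun P hP => by rw [hΦQ P (hS hP), tsum_ofReal_mul_of_mem_natPrep hP hpos]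
  have hmax : IsMaxOn (Φ · Q) (NatPrep f a) Q :=
    fun P hP => ((hconst P hP).trans (hconst Q hQ).symm).le
  obtain ⟨hinfsup, hsupinf⟩ :=
    isSaddlePointOn_value (hS hQ) hQ (hΦ.isSaddlePointOn (hS hQ) hmax)
  rw [← hconst Q hQ] at hfin ⊢
  exact ⟨rfl, fun P hP hne => hΦ.entropy_lt_of_isMaxOn hS (hS hQ) hmax hfin hP hne,
    hsupinf, hinfsup, hΦ.iSup_entropy_eq hS hQ hmax⟩

/-- **MaxEnt calculus.**
Let `Φ(P,Q) = ξ_Q (Σ_i p_i κ(q_i))` be a measure of complexity on the probability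
distributions over a countable alphabet `A`.  Suppose `Q` is a probability
distribution and `λ₀, λ₁, …, λ_k` are real constants with
`κ(q_i) = λ₀ + Σ_ν λ_ν f_ν(i)` for all `i`, and suppose the averages
`a_ν = Σ_i q_i f_ν(i)` converge absolutely.  Then `Q ∈ 𝒫_a`, `Q` is the unique
maximum-entropy distribution of `𝒫_a`, the game `γ(Φ,𝒫_a)` is in equilibrium, and
`MaxEnt(Φ,𝒫_a) = ξ_Q(λ₀ + λ·a) < ∞` (assuming this value is finite). -/
theorem maxent_calculus {A : Type*} [Countable A] {k : ℕ}
    (f : Fin k → A → ℝ) (κ : ℝ → ℝ≥0∞)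
    (ξ : (A → ℝ) → ℝ≥0∞ → ℝ≥0∞)
    (Φ : (A → ℝ) → (A → ℝ) → ℝ≥0∞)
    (hΦ : ∀ P Q : A → ℝ, Φ P Q = ξ Q (∑' i, ENNReal.ofReal (P i) * κ (Q i)))
    (hmin : ∀ P Q : A → ℝ, IsPMF P → IsPMF Q → Φ P P ≤ Φ P Q)
    (hstrict : ∀ P Q : A → ℝ, IsPMF P → IsPMF Q → Q ≠ P → Φ P Q = Φ P P → Φ P P = ⊤)
    (Q : A → ℝ) (hQ : IsPMF Q)
    (lam0 : ℝ) (lam : Fin k → ℝ)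
    (hpos : ∀ i, 0 ≤ lam0 + ∑ ν, lam ν * f ν i)
    (hκQ : ∀ i, κ (Q i) = ENNReal.ofReal (lam0 + ∑ ν, lam ν * f ν i))
    (a : Fin k → ℝ)
    (ha : ∀ ν, Summable (fun i => |Q i * f ν i|) ∧ HasSum (fun i => Q i * f ν i) (a ν))
    (hfin : ξ Q (ENNReal.ofReal (lam0 + ∑ ν, lam ν * a ν)) ≠ ⊤) :
    Q ∈ NatPrep f a ∧
    Φ Q Q = ξ Q (ENNReal.ofReal (lam0 + ∑ ν, lam ν * a ν)) ∧
    (∀ P ∈ NatPrep f a, P ≠ Q → Φ P P < Φ Q Q) ∧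
    (⨆ P ∈ NatPrep f a, ⨅ Q' ∈ {R : A → ℝ | IsPMF R}, Φ P Q')
        = ξ Q (ENNReal.ofReal (lam0 + ∑ ν, lam ν * a ν)) ∧
    (⨅ Q' ∈ {R : A → ℝ | IsPMF R}, ⨆ P ∈ NatPrep f a, Φ P Q')
        = ξ Q (ENNReal.ofReal (lam0 + ∑ ν, lam ν * a ν)) ∧
    (⨆ P ∈ NatPrep f a, Φ P P) = ξ Q (ENNReal.ofReal (lam0 + ∑ ν, lam ν * a ν)) :=
  ⟨⟨hQ, ha⟩, maxent_calculus_general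
    ⟨fun P hP R hR => hmin P R hP hR, fun P hP R hR => hstrict P R hP hR⟩ ⟨hQ, ha⟩ hpos
    (fun P _ => by simp only [hΦ, hκQ]) hfin⟩
end

section
/- Let h : [0,1] → ℝ be continuous on [0,1] and differentiable on (0,1) with h(1) = 0. Then the corrector ξ(x) = h(x) − x·(h'(x) + 1) vanishes identically on (0,1) if and only if h(x) = x·ln(1/x) for all x ∈ (0,1] (with h(0) = 0). That is, the correction term vanishes exactly in the classical Boltzmann–Gibbs–Shannon case. -/
/-!
The quotient `h x / x + log x` has derivative `-ξ x / x ^ 2`, so the corrector `ξ` vanishes on an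
interval avoiding `0` exactly when `h x = c * x - x * log x` there for some constant `c`. By
continuity this form persists at the endpoints, where the value of `h` at the right one
determines `c`.
-/

open Set Real

/-- The corrector `ξ` of an entropy density `h`, measuring its deviation from the classical
Boltzmann–Gibbs–Shannon one; the derivative of `h` is supplied separately as `h'`. -/
def corrector (h h' : ℝ → ℝ) (x : ℝ) : ℝ :=
  h x - x * (h' x + 1)

theorem forall_deriv_eq_zero_iff_exists_eq_const {𝕜 F : Type*} [RCLike 𝕜] [NormedAddCommGroup F]
    [NormedSpace 𝕜 F] {s : Set 𝕜} {f f' : 𝕜 → F} (hs : IsOpen s) (hs' : IsPreconnected s)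
    (hf : ∀ x ∈ s, HasDerivAt f (f' x) x) :
    (∀ x ∈ s, f' x = 0) ↔ ∃ c, ∀ x ∈ s, f x = c := by
  constructor
  · intro hf'
    exact hs.exists_is_const_of_deriv_eq_zero hs'
      (fun x hx => (hf x hx).differentiableAt.differentiableWithinAt)
      (fun x hx => (hf x hx).deriv.trans (hf' x hx))
  · rintro ⟨c, hc⟩ x hx
    have hfc : f =ᶠ[nhds x] fun _ => c := Filter.eventuallyEq_of_mem (hs.mem_nhds hx) hc
    exact (hf x hx).unique ((hasDerivAt_const x c).congr_of_eventuallyEq hfc)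

theorem eqOn_Ioo_iff_eqOn_Icc {X Y : Type*} [LinearOrder X] [DenselyOrdered X]
    [TopologicalSpace X] [OrderTopology X] [TopologicalSpace Y] [T2Space Y] {a b : X}
    {f g : X → Y} (hab : a ≠ b) (hf : ContinuousOn f (Icc a b)) (hg : ContinuousOn g (Icc a b)) :
    EqOn f g (Ioo a b) ↔ EqOn f g (Icc a b) :=
  ⟨fun hfg => hfg.of_subset_closure hf hg Ioo_subset_Icc_self (closure_Ioo hab).ge,
    fun hfg => hfg.mono Ioo_subset_Icc_self⟩

section Corrector

variable {h h' : ℝ → ℝ}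

theorem hasDerivAt_div_add_log {x : ℝ} (hx : x ≠ 0) (hd : HasDerivAt h (h' x) x) :
    HasDerivAt (fun y => h y / y + log y) (-corrector h h' x / x ^ 2) x := by
  refine ((hd.div (hasDerivAt_id' x) hx).add (hasDerivAt_log hx)).congr_deriv ?_
  rw [corrector]
  field_simp
  ring

theorem div_add_log_eq_iff {x y c : ℝ} (hx : x ≠ 0) :
    y / x + log x = c ↔ y = c * x + negMulLog x := by
  rw [← eq_sub_iff_add_eq, div_eq_iff hx, negMulLog, sub_mul, neg_mul, ← sub_eq_add_neg,
    mul_comm (log x)]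

theorem forall_corrector_eq_zero_iff {s : Set ℝ} (hs : IsOpen s) (hs' : IsPreconnected s)
    (h0 : 0 ∉ s) (hd : ∀ x ∈ s, HasDerivAt h (h' x) x) :
    (∀ x ∈ s, corrector h h' x = 0) ↔ ∃ c, EqOn h (fun x => c * x + negMulLog x) s := by
  have hne : ∀ x ∈ s, x ≠ 0 := fun x hx => ne_of_mem_of_not_mem hx h0
  calc (∀ x ∈ s, corrector h h' x = 0)
    _ ↔ ∀ x ∈ s, -corrector h h' x / x ^ 2 = 0 :=
      forall₂_congr fun x hx => by simp [hne x hx]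
    _ ↔ ∃ c, ∀ x ∈ s, h x / x + log x = c :=
      forall_deriv_eq_zero_iff_exists_eq_const hs hs' fun x hx =>
        hasDerivAt_div_add_log (hne x hx) (hd x hx)
    _ ↔ ∃ c, EqOn h (fun x => c * x + negMulLog x) s :=
      exists_congr fun _ => forall₂_congr fun x hx => div_add_log_eq_iff (hne x hx)

theorem mul_log_div_add {b x : ℝ} (hb : b ≠ 0) (hx : x ≠ 0) (a : ℝ) :
    x * (log (b / x) + a) = (a + log b) * x + negMulLog x := by
  rw [log_div hb hx, negMulLog]
  ring

theorem exists_eqOn_mul_add_negMulLog_iff {b : ℝ} (hb : 0 < b) :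
    (∃ c, EqOn h (fun x => c * x + negMulLog x) (Icc 0 b)) ↔
      (∀ x ∈ Ioc 0 b, h x = x * (log (b / x) + h b / b)) ∧ h 0 = 0 := by
  constructor
  · rintro ⟨c, hc⟩
    have hcb : h b / b + log b = c := (div_add_log_eq_iff hb.ne').2 (hc ⟨hb.le, le_rfl⟩)
    refine ⟨fun x hx => ?_, by simpa using hc ⟨le_rfl, hb.le⟩⟩
    rw [mul_log_div_add hb.ne' hx.1.ne', hcb]
    exact hc (Ioc_subset_Icc_self hx)
  · rintro ⟨hpos, hzero⟩
    refine ⟨h b / b + log b, fun x hx => ?_⟩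
    obtain rfl | hx0 := hx.1.eq_or_lt
    · simpa using hzero
    · exact (hpos x ⟨hx0, hx.2⟩).trans (mul_log_div_add hb.ne' hx0.ne' _)

theorem corrector_vanishes_iff_classical_general {b : ℝ} (hb : 0 < b)
    (hcont : ContinuousOn h (Icc 0 b)) (hd : ∀ x ∈ Ioo 0 b, HasDerivAt h (h' x) x) :
    (∀ x ∈ Ioo 0 b, h x - x * (h' x + 1) = 0) ↔
      (∀ x ∈ Ioc 0 b, h x = x * (log (b / x) + h b / b)) ∧ h 0 = 0 :=
  calc (∀ x ∈ Ioo 0 b, corrector h h' x = 0)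
    _ ↔ ∃ c, EqOn h (fun x => c * x + negMulLog x) (Ioo 0 b) :=
      forall_corrector_eq_zero_iff isOpen_Ioo isPreconnected_Ioo left_notMem_Ioo hd
    _ ↔ ∃ c, EqOn h (fun x => c * x + negMulLog x) (Icc 0 b) :=
      exists_congr fun _ => eqOn_Ioo_iff_eqOn_Icc hb.ne hcont (by fun_prop)
    _ ↔ _ := exists_eqOn_mul_add_negMulLog_iff hb

end Corrector

/-- **The correction vanishes exactly in the classical BGS case.**
Let `h : [0,1] → ℝ` be continuous on `[0,1]` and differentiable on `(0,1)` with
`h 1 = 0`.  Then the corrector `ξ x = h x - x * (h' x + 1)` vanishes identically on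
`(0,1)` if and only if `h x = x * ln (1/x)` for all `x ∈ (0,1]` (with `h 0 = 0`). -/
theorem corrector_vanishes_iff_classical (h h' : ℝ → ℝ)
    (hcont : ContinuousOn h (Set.Icc 0 1))
    (hd : ∀ x ∈ Set.Ioo (0 : ℝ) 1, HasDerivAt h (h' x) x)
    (h1 : h 1 = 0) :
    (∀ x ∈ Set.Ioo (0 : ℝ) 1, h x - x * (h' x + 1) = 0) ↔
    ((∀ x ∈ Set.Ioc (0 : ℝ) 1, h x = x * Real.log (1 / x)) ∧ h 0 = 0) := by
  simpa only [h1, zero_div, add_zero] using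
    corrector_vanishes_iff_classical_general one_pos hcont hd
end

section
/- For real parameters (α,β) with either 0 ≤ α < 1 and β ≤ 0, or α ≤ 0 and 0 ≤ β < 1, the function h_{α,β}(x) = x·ln_{α,β}(1/x) is a Bregman generator: h_{α,β} extends continuously to [0,1] with h_{α,β}(0) = h_{α,β}(1) = 0, its derivative satisfies h'_{α,β}(1) = −1, and h_{α,β} is strictly concave on (0,1] (equivalently, h''_{α,β}(x) < 0 for x ∈ (0,1)). -/
/-- The Bregman generator `h_{α,β}(x) = x · ln_{α,β}(1/x)` built from the deformed
logarithm `ln_{α,β} y = (y^β - y^α)/(β - α)` (for `α ≠ β`) and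
`ln_{α,α} y = y^α · ln y`.  Thus for `α ≠ β`,
`h_{α,β}(x) = (x^(1-β) - x^(1-α))/(β - α)`, and `h_{α,α}(x) = x^(1-α) · ln (1/x)`. -/
noncomputable def habGen (α β : ℝ) : ℝ → ℝ := fun x =>
  if α = β then x ^ (1 - α) * Real.log (1 / x)
  else (x ^ (1 - β) - x ^ (1 - α)) / (β - α)

/-!
Since `h_{α,β} = h_{β,α}`, assume `β ≤ 0 ≤ α < 1`. If `α = β`, both parameters vanish and `h_{0,0}`
is the Shannon entropy `-x log x`. Otherwise `h_{α,β}` is a positive multiple of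
`x^(1-α) - x^(1-β)` with `0 < 1 - α ≤ 1 ≤ 1 - β`: a concave power minus a convex one, at least one
of them strictly so.
-/

open Set

section Convexity

variable {𝕜 E F : Type*} [CommSemiring 𝕜] [PartialOrder 𝕜] [AddCommMonoid E] [AddCommMonoid F]
  [PartialOrder F] [SMul 𝕜 E] [Module 𝕜 F] [PosSMulStrictMono 𝕜 F] {s : Set E} {f : E → F} {c : 𝕜}

theorem strictConcaveOn_const_smul (hc : 0 < c) (hf : StrictConcaveOn 𝕜 s f) :
    StrictConcaveOn 𝕜 s fun x => c • f x := by
  refine ⟨hf.1, fun x hx y hy hxy a b ha hb hab => ?_⟩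
  calc
    a • c • f x + b • c • f y = c • (a • f x + b • f y) := by
      rw [smul_add, smul_comm a c, smul_comm b c]
    _ < c • f (a • x + b • y) := smul_lt_smul_of_pos_left (hf.2 hx hy hxy ha hb hab) hc

end Convexity

theorem strictConcaveOn_rpow_sub_rpow {p q : ℝ} (hp₀ : 0 < p) (hp₁ : p ≤ 1) (hq : 1 ≤ q)
    (hpq : p < q) : StrictConcaveOn ℝ (Ici 0) fun x : ℝ => x ^ p - x ^ q := by
  rcases hp₁.lt_or_eq with hp | rfl
  · exact (Real.strictConcaveOn_rpow hp₀ hp).sub_convexOn (convexOn_rpow hq)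
  · exact (Real.concaveOn_rpow hp₀.le le_rfl).sub_strictConvexOn (strictConvexOn_rpow hpq)

section HabGen

variable {α β : ℝ}

theorem habGen_self (α : ℝ) : habGen α α = fun x => x ^ (1 - α) * -Real.log x := by
  funext x
  simp only [habGen, if_true, one_div, Real.log_inv]

theorem habGen_of_ne (h : α ≠ β) :
    habGen α β = fun x => (x ^ (1 - β) - x ^ (1 - α)) / (β - α) := by
  funext x
  simp only [habGen, if_neg h]

theorem habGen_comm (α β : ℝ) : habGen α β = habGen β α := by
  rcases eq_or_ne α β with rfl | h
  · rfl
  · rw [habGen_of_ne h, habGen_of_ne h.symm]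
    funext x
    rw [← neg_sub (x ^ (1 - α)), ← neg_sub α β, neg_div_neg_eq]

theorem habGen_zero_zero : habGen 0 0 = Real.negMulLog := by
  funext x
  simp only [habGen_self, Real.negMulLog, sub_zero, Real.rpow_one, mul_neg, neg_mul]

theorem eqOn_habGen_self_negMulLog_rpow (hα : α ≠ 1) :
    EqOn (habGen α α) (fun x => Real.negMulLog (x ^ (1 - α)) / (1 - α)) (Ici 0) := by
  have hα' : 1 - α ≠ 0 := sub_ne_zero.2 hα.symm
  intro x hx
  rcases (mem_Ici.1 hx).eq_or_lt with rfl | hx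
  · simp [habGen_self, Real.zero_rpow hα']
  · simp only [habGen_self, Real.negMulLog, Real.log_rpow hx]
    field_simp

theorem habGen_apply_zero (hα : α ≠ 1) (hβ : β ≠ 1) : habGen α β 0 = 0 := by
  rcases eq_or_ne α β with rfl | h
  · simp [habGen_self]
  · simp [habGen_of_ne h, Real.zero_rpow (sub_ne_zero.2 hα.symm),
      Real.zero_rpow (sub_ne_zero.2 hβ.symm)]

theorem habGen_apply_one (α β : ℝ) : habGen α β 1 = 0 := by
  simp [habGen]

theorem continuousOn_habGen (hα : α < 1) (hβ : β < 1) : ContinuousOn (habGen α β) (Ici 0) := by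
  have continuous_rpow {γ : ℝ} (hγ : γ < 1) : Continuous fun x : ℝ => x ^ (1 - γ) :=
    Real.continuous_rpow_const (sub_pos.2 hγ).le
  rcases eq_or_ne α β with rfl | h
  · have hcont : Continuous fun x : ℝ => Real.negMulLog (x ^ (1 - α)) / (1 - α) :=
      (Real.continuous_negMulLog.comp (continuous_rpow hα)).div_const _
    exact hcont.continuousOn.congr (eqOn_habGen_self_negMulLog_rpow hα.ne)
  · rw [habGen_of_ne h]
    exact (((continuous_rpow hβ).sub (continuous_rpow hα)).div_const _).continuousOn

theorem hasDerivAt_habGen_one (α β : ℝ) : HasDerivAt (habGen α β) (-1) 1 := by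
  have hasDerivAt_rpow (γ : ℝ) : HasDerivAt (fun x : ℝ => x ^ (1 - γ)) (1 - γ) 1 := by
    simpa using Real.hasDerivAt_rpow_const (x := 1) (p := 1 - γ) (Or.inl one_ne_zero)
  rcases eq_or_ne α β with rfl | h
  · rw [habGen_self]
    simpa using (hasDerivAt_rpow α).fun_mul (Real.hasDerivAt_log one_ne_zero).fun_neg
  · rw [habGen_of_ne h]
    refine (((hasDerivAt_rpow β).fun_sub (hasDerivAt_rpow α)).div_const _).congr_deriv ?_
    rw [sub_sub_sub_cancel_left, ← neg_sub, neg_div, div_self (sub_ne_zero.2 h.symm)]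

theorem strictConcaveOn_habGen (hα₀ : 0 ≤ α) (hα₁ : α < 1) (hβ : β ≤ 0) :
    StrictConcaveOn ℝ (Ici 0) (habGen α β) := by
  rcases (hβ.trans hα₀).eq_or_lt with rfl | hβα
  · obtain rfl : β = 0 := le_antisymm hβ hα₀
    rw [habGen_zero_zero]
    exact Real.strictConcaveOn_negMulLog
  · have hsmul : habGen α β = fun x => (α - β)⁻¹ • (x ^ (1 - α) - x ^ (1 - β)) := by
      rw [habGen_comm, habGen_of_ne hβα.ne]
      simp only [smul_eq_mul, div_eq_inv_mul]
    rw [hsmul]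
    exact strictConcaveOn_const_smul (inv_pos.2 (sub_pos.2 hβα))
      (strictConcaveOn_rpow_sub_rpow (by linarith) (by linarith) (by linarith) (by linarith))

end HabGen

/-- **The deformed logarithms give Bregman generators.**
For real parameters `(α,β)` with either `0 ≤ α < 1` and `β ≤ 0`, or `α ≤ 0` and
`0 ≤ β < 1`, the function `h_{α,β}(x) = x · ln_{α,β}(1/x)` is a Bregman generator:
it is continuous on `[0,1]` with `h_{α,β}(0) = h_{α,β}(1) = 0`, its (one-sided)
derivative at `1` equals `-1`, and it is strictly concave on `(0,1]`. -/
theorem habGen_is_bregman_generator (α β : ℝ)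
    (hpar : (0 ≤ α ∧ α < 1 ∧ β ≤ 0) ∨ (α ≤ 0 ∧ 0 ≤ β ∧ β < 1)) :
    ContinuousOn (habGen α β) (Set.Icc 0 1) ∧
    habGen α β 0 = 0 ∧
    habGen α β 1 = 0 ∧
    HasDerivWithinAt (habGen α β) (-1) (Set.Icc 0 1) 1 ∧
    StrictConcaveOn ℝ (Set.Ioc 0 1) (habGen α β) := by
  have hlt : α < 1 ∧ β < 1 := by
    rcases hpar with ⟨-, hα, hβ⟩ | ⟨hα, -, hβ⟩ <;> constructor <;> linarith
  have hconcave : StrictConcaveOn ℝ (Ici 0) (habGen α β) := by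
    rcases hpar with ⟨hα₀, hα₁, hβ⟩ | ⟨hα, hβ₀, hβ₁⟩
    · exact strictConcaveOn_habGen hα₀ hα₁ hβ
    · exact habGen_comm α β ▸ strictConcaveOn_habGen hβ₀ hβ₁ hα
  exact ⟨(continuousOn_habGen hlt.1 hlt.2).mono Icc_subset_Ici_self,
    habGen_apply_zero hlt.1.ne hlt.2.ne, habGen_apply_one α β,
    (hasDerivAt_habGen_one α β).hasDerivWithinAt,
    hconcave.subset (Ioc_subset_Icc_self.trans Icc_subset_Ici_self) (convex_Ioc 0 1)⟩
end

section
/- Let A be a finite alphabet, q > 0 with q ≠ 1, and let P = (p_i), Q = (q_i) be probability distributions on A with q_i > 0 for all i. Then the Bregman complexity Φ^B(P,Q) = 1/(q−1) + Σ_i ( q_i^q − (q/(q−1))·p_i·q_i^{q−1} ) satisfies Φ^B(P,Q) ≥ S_q(P), with equality if and only if P = Q. Hence Tsallis entropy S_q arises as minimal Bregman complexity: inf_Q Φ^B(P,Q) = Φ^B(P,P) = S_q(P). -/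
open Finset

/-!
The function `f t = t ^ q / (q - 1)` is strictly convex on `[0, ∞)` for `q` on either side of `1`:
the sign of `q - 1` compensates the change of curvature of `t ^ q`. Since `S_q(P)` is
`1 / (q - 1) - ∑ f (p_i)`, and `Φ^B(P, Q)` is the same expression with `f (p_i)` replaced by the
value at `p_i` of the tangent line to `f` at `q_i`, the gap `Φ^B(P, Q) - S_q(P)` is the Bregman
divergence of `f`, which is nonnegative and vanishes only for `P = Q`.
-/

theorem strictConvexOn_const_mul {E : Type*} [AddCommMonoid E] [SMul ℝ E] {S : Set E}
    {f : E → ℝ} {c : ℝ} (hc : 0 < c) (hf : StrictConvexOn ℝ S f) :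
    StrictConvexOn ℝ S fun x => c * f x := by
  refine ⟨hf.1, fun x hx y hy hxy a b ha hb hab => ?_⟩
  calc c * f (a • x + b • y) < c * (a • f x + b • f y) := by
        gcongr
        exact hf.2 hx hy hxy ha hb hab
    _ = a • (c * f x) + b • (c * f y) := by
        simp only [smul_eq_mul]
        ring

section BregmanDivergence

/-- The Bregman divergence from `x` to `p` generated by `f`: the error at `p` of the tangent line
to `f` at `x`. The derivative `f'` is an argument, instead of `deriv f`, so that closed formulas
for it can be used without differentiability side conditions. -/
def bregmanDiv (f f' : ℝ → ℝ) (p x : ℝ) : ℝ :=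
  f p - f x - f' x * (p - x)

variable {f f' : ℝ → ℝ} {S : Set ℝ} {p x : ℝ}

theorem bregmanDiv_self (f f' : ℝ → ℝ) (x : ℝ) : bregmanDiv f f' x x = 0 := by
  simp [bregmanDiv]

theorem bregmanDiv_pos (hf : StrictConvexOn ℝ S f) (hp : p ∈ S) (hx : x ∈ S)
    (hf' : HasDerivAt f (f' x) x) (hne : p ≠ x) : 0 < bregmanDiv f f' p x := by
  rw [bregmanDiv]
  rcases hne.lt_or_gt with hlt | hgt
  · have hslope : (f x - f p) / (x - p) < f' x := by
      simpa only [slope_def_field] using hf.slope_lt_of_hasDerivAt hp hx hlt hf'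
    rw [div_lt_iff₀ (sub_pos.2 hlt)] at hslope
    linarith
  · have hslope : f' x < (f p - f x) / (p - x) := by
      simpa only [slope_def_field] using hf.lt_slope_of_hasDerivAt hx hp hgt hf'
    rw [lt_div_iff₀ (sub_pos.2 hgt)] at hslope
    linarith

theorem bregmanDiv_nonneg (hf : ConvexOn ℝ S f) (hp : p ∈ S) (hx : x ∈ S)
    (hf' : HasDerivAt f (f' x) x) : 0 ≤ bregmanDiv f f' p x := by
  rw [bregmanDiv]
  rcases lt_trichotomy p x with hlt | rfl | hgt
  · have hslope : (f x - f p) / (x - p) ≤ f' x := by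
      simpa only [slope_def_field] using hf.slope_le_of_hasDerivAt hp hx hlt hf'
    rw [div_le_iff₀ (sub_pos.2 hlt)] at hslope
    linarith
  · simp
  · have hslope : f' x ≤ (f p - f x) / (p - x) := by
      simpa only [slope_def_field] using hf.le_slope_of_hasDerivAt hx hp hgt hf'
    rw [le_div_iff₀ (sub_pos.2 hgt)] at hslope
    linarith

theorem bregmanDiv_eq_zero_iff (hf : StrictConvexOn ℝ S f) (hp : p ∈ S) (hx : x ∈ S)
    (hf' : HasDerivAt f (f' x) x) : bregmanDiv f f' p x = 0 ↔ p = x := by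
  refine ⟨fun h => ?_, fun h => h ▸ bregmanDiv_self f f' p⟩
  by_contra hne
  exact (bregmanDiv_pos hf hp hx hf' hne).ne' h

theorem sum_bregmanDiv_eq_zero_iff {A : Type*} [Fintype A] {P Q : A → ℝ}
    (hf : StrictConvexOn ℝ S f) (hP : ∀ i, P i ∈ S) (hQ : ∀ i, Q i ∈ S)
    (hf' : ∀ i, HasDerivAt f (f' (Q i)) (Q i)) :
    ∑ i, bregmanDiv f f' (P i) (Q i) = 0 ↔ P = Q := by
  rw [sum_eq_zero_iff_of_nonneg fun i _ =>
    bregmanDiv_nonneg hf.convexOn (hP i) (hQ i) (hf' i), funext_iff]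
  simp only [mem_univ, true_imp_iff, bregmanDiv_eq_zero_iff hf (hP _) (hQ _) (hf' _)]

end BregmanDivergence

section TsallisGenerator

/-- The convex function `t ↦ t ^ q / (q - 1)` whose negated sum is, up to the constant
`1 / (q - 1)`, the Tsallis entropy with parameter `q`. -/
noncomputable def tsallisGenerator (q t : ℝ) : ℝ :=
  t ^ q / (q - 1)

/-- The derivative of `tsallisGenerator q`, in closed form. -/
noncomputable def tsallisGeneratorDeriv (q t : ℝ) : ℝ :=
  q / (q - 1) * t ^ (q - 1)

variable {q : ℝ}

theorem hasDerivAt_tsallisGenerator {t : ℝ} (ht : t ≠ 0 ∨ 1 ≤ q) :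
    HasDerivAt (tsallisGenerator q) (tsallisGeneratorDeriv q t) t := by
  rw [tsallisGeneratorDeriv, div_mul_eq_mul_div]
  exact (Real.hasDerivAt_rpow_const ht).div_const (q - 1)

theorem strictConvexOn_tsallisGenerator (hq0 : 0 < q) (hq1 : q ≠ 1) :
    StrictConvexOn ℝ (Set.Ici 0) (tsallisGenerator q) := by
  rcases hq1.lt_or_gt with hlt | hgt
  · have hscaled := strictConvexOn_const_mul (inv_pos.2 (sub_pos.2 hlt))
      (Real.strictConcaveOn_rpow hq0 hlt).neg
    refine hscaled.congr fun t _ => ?_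
    simp only [tsallisGenerator, Pi.neg_apply, ← neg_sub q 1, inv_neg, neg_mul_neg, inv_mul_eq_div]
  · have hscaled := strictConvexOn_const_mul (inv_pos.2 (sub_pos.2 hgt)) (strictConvexOn_rpow hgt)
    exact hscaled.congr fun t _ => inv_mul_eq_div _ _

theorem bregmanDiv_tsallisGenerator (hq0 : q ≠ 0) (hq1 : q ≠ 1) (p : ℝ) {x : ℝ} (hx : 0 ≤ x) :
    bregmanDiv (tsallisGenerator q) (tsallisGeneratorDeriv q) p x =
      x ^ q - q / (q - 1) * p * x ^ (q - 1) + p ^ q / (q - 1) := by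
  have hq : q - 1 ≠ 0 := sub_ne_zero.2 hq1
  have hpow : x ^ q = x * x ^ (q - 1) := by
    rw [← Real.rpow_one_add' hx (by simpa using hq0), add_sub_cancel]
  rw [bregmanDiv, tsallisGenerator, tsallisGenerator, tsallisGeneratorDeriv, hpow]
  field_simp
  ring

end TsallisGenerator

section Complexity

variable {A : Type*} [Fintype A]

/-- The Tsallis entropy `S_q(P)`, for nonnegative weights `P` on a finite alphabet. -/
noncomputable def tsallisEntropy (q : ℝ) (P : A → ℝ) : ℝ :=
  (1 - ∑ i, P i ^ q) / (q - 1)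

/-- The Bregman complexity `Φ^B(P, Q)`, for nonnegative weights `P`, `Q` on a finite alphabet. When
`q < 1` and `Q i = 0`, the factor `Q i ^ (q - 1)` is `0` instead of `∞`. -/
noncomputable def bregmanComplexity (q : ℝ) (P Q : A → ℝ) : ℝ :=
  1 / (q - 1) + ∑ i, (Q i ^ q - q / (q - 1) * P i * Q i ^ (q - 1))

variable {q : ℝ} {P Q : A → ℝ}

theorem bregmanComplexity_eq_tsallisEntropy_add (hq0 : q ≠ 0) (hq1 : q ≠ 1) (P : A → ℝ)
    (hQ : ∀ i, 0 ≤ Q i) :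
    bregmanComplexity q P Q = tsallisEntropy q P +
      ∑ i, bregmanDiv (tsallisGenerator q) (tsallisGeneratorDeriv q) (P i) (Q i) := by
  simp only [bregmanDiv_tsallisGenerator hq0 hq1 _ (hQ _), bregmanComplexity, tsallisEntropy]
  rw [sum_add_distrib, ← sum_div]
  ring

theorem bregmanComplexity_self (hq0 : q ≠ 0) (hq1 : q ≠ 1) (hP : ∀ i, 0 ≤ P i) :
    bregmanComplexity q P P = tsallisEntropy q P := by
  simp only [bregmanComplexity_eq_tsallisEntropy_add hq0 hq1 P hP, bregmanDiv_self,
    sum_const_zero, add_zero]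

theorem tsallisEntropy_le_bregmanComplexity (hq0 : 0 < q) (hq1 : q ≠ 1) (hP : ∀ i, 0 ≤ P i)
    (hQ : ∀ i, 0 ≤ Q i) (hQ' : ∀ i, Q i ≠ 0 ∨ 1 ≤ q) :
    tsallisEntropy q P ≤ bregmanComplexity q P Q := by
  rw [bregmanComplexity_eq_tsallisEntropy_add hq0.ne' hq1 P hQ]
  exact le_add_of_nonneg_right <| sum_nonneg fun i _ =>
    bregmanDiv_nonneg (strictConvexOn_tsallisGenerator hq0 hq1).convexOn (hP i) (hQ i)
      (hasDerivAt_tsallisGenerator (hQ' i))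

theorem bregmanComplexity_eq_tsallisEntropy_iff (hq0 : 0 < q) (hq1 : q ≠ 1) (hP : ∀ i, 0 ≤ P i)
    (hQ : ∀ i, 0 ≤ Q i) (hQ' : ∀ i, Q i ≠ 0 ∨ 1 ≤ q) :
    bregmanComplexity q P Q = tsallisEntropy q P ↔ P = Q := by
  rw [bregmanComplexity_eq_tsallisEntropy_add hq0.ne' hq1 P hQ, add_eq_left]
  exact sum_bregmanDiv_eq_zero_iff (strictConvexOn_tsallisGenerator hq0 hq1) hP hQ
    fun i => hasDerivAt_tsallisGenerator (hQ' i)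

theorem tsallis_minimal_bregman_complexity_general (hq0 : 0 < q) (hq1 : q ≠ 1)
    (hP : ∀ i, 0 ≤ P i) (hQ : ∀ i, 0 ≤ Q i) (hQ' : ∀ i, Q i ≠ 0 ∨ 1 ≤ q) :
    tsallisEntropy q P ≤ bregmanComplexity q P Q ∧
      (bregmanComplexity q P Q = tsallisEntropy q P ↔ P = Q) ∧
      bregmanComplexity q P P = tsallisEntropy q P :=
  ⟨tsallisEntropy_le_bregmanComplexity hq0 hq1 hP hQ hQ',
    bregmanComplexity_eq_tsallisEntropy_iff hq0 hq1 hP hQ hQ',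
    bregmanComplexity_self hq0.ne' hq1 hP⟩

end Complexity

/-- **Tsallis entropy as minimal Bregman complexity.**
Let `A` be a finite alphabet, `q > 0`, `q ≠ 1`, and let `P, Q` be probability
distributions on `A` with `q_i > 0` for all `i`.  Then the Bregman complexity
`Φ^B(P,Q) = 1/(q-1) + Σ_i (q_i^q - (q/(q-1)) p_i q_i^(q-1))` satisfies
`Φ^B(P,Q) ≥ S_q(P)`, with equality iff `P = Q`, and `Φ^B(P,P) = S_q(P)`, where
`S_q(P) = (1 - Σ_i p_i^q)/(q-1)` is the Tsallis entropy. -/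
theorem tsallis_minimal_bregman_complexity {A : Type*} [Fintype A]
    (q : ℝ) (hq0 : 0 < q) (hq1 : q ≠ 1)
    (P Q : A → ℝ)
    (hP0 : ∀ i, 0 ≤ P i) (hP1 : ∑ i, P i = 1)
    (hQ0 : ∀ i, 0 < Q i) (hQ1 : ∑ i, Q i = 1) :
    (1 - ∑ i, P i ^ q) / (q - 1)
        ≤ 1 / (q - 1) + ∑ i, (Q i ^ q - q / (q - 1) * P i * Q i ^ (q - 1)) ∧
    (1 / (q - 1) + ∑ i, (Q i ^ q - q / (q - 1) * P i * Q i ^ (q - 1))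
        = (1 - ∑ i, P i ^ q) / (q - 1) ↔ P = Q) ∧
    1 / (q - 1) + ∑ i, (P i ^ q - q / (q - 1) * P i * P i ^ (q - 1))
        = (1 - ∑ i, P i ^ q) / (q - 1) :=
  tsallis_minimal_bregman_complexity_general hq0 hq1 hP0 (fun i => (hQ0 i).le)
    fun i => .inl (hQ0 i).ne'
end
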